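/- Assume M, N, P ≥ 2 are pairwise coprime integers. Then the triangle Artin group Art_{M,N,P} is not poly-free. -/

import Mathlib

/-!
Write `G` for the triangle Artin group. The theorem holds because `G'` is a nontrivial perfect
group, while a poly-free group has no nontrivial perfect subgroup.

* A perfect group has only trivial homomorphisms to free groups (`perfect_hom_freeGroup`), so a
  perfect subgroup descends through every step of a poly-free chain
  (`IsPolyFree.eq_bot_of_perfect`).

* `G'` is perfect (`ArtinTri.commutator_le_derivedSeries_two`). At least two of `M`, `N`, `P` are
  odd, so `a`, `b`, `c` have the same image in the abelianization. In `Q = G / G''` the abelian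
  group `Q'` is a module over `ℤ[t]`, with `t` acting as conjugation by `a`; put `x = b a⁻¹` and
  `y = c a⁻¹`. With `s = -t` and `[n] = 1 + s + ⋯ + s ^ (n - 1)`, the three braid relations become
  `[M] x = 0`, `[N] (x - y) = 0`, `[P] y = 0` (`geom_sum_of_altProd_comm`). For coprime `m`, `n` the
  polynomials `[m]`, `[n]` generate the unit ideal of `ℤ[s]` (`isCoprime_geom_sum`), which forces
  `x = y = 0` (`eq_zero_of_geom_sum`). Hence `Q` is cyclic and `G' = G''`.

* `G` is not abelian (`ArtinTri.commutator_ne_bot`): in the reflection representation of the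
  associated Coxeter group, two generators whose braid relation has length at least `3` do not
  commute.
-/

/-- The alternating word `{x,y}_K = xyxy⋯` of length `K` starting with `x`. -/
def altWord {α : Type} : ℕ → FreeGroup α → FreeGroup α → FreeGroup α
  | 0, _, _ => 1
  | n + 1, x, y => x * altWord n y x

/-- Generators: `0 ↦ a`, `1 ↦ b`, `2 ↦ c`. -/
def ArtinTri.a : FreeGroup (Fin 3) := FreeGroup.of 0
def ArtinTri.b : FreeGroup (Fin 3) := FreeGroup.of 1
def ArtinTri.c : FreeGroup (Fin 3) := FreeGroup.of 2

/-- Relators of the triangle Artin group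
`Art_{M,N,P} = ⟨a,b,c | {a,b}_M = {b,a}_M, {b,c}_N = {c,b}_N, {c,a}_P = {a,c}_P⟩`. -/
def ArtinTri.rels (M N P : ℕ) : Set (FreeGroup (Fin 3)) :=
  { altWord M ArtinTri.a ArtinTri.b * (altWord M ArtinTri.b ArtinTri.a)⁻¹,
    altWord N ArtinTri.b ArtinTri.c * (altWord N ArtinTri.c ArtinTri.b)⁻¹,
    altWord P ArtinTri.c ArtinTri.a * (altWord P ArtinTri.a ArtinTri.c)⁻¹ }

/-- The triangle Artin group `Art_{M,N,P}`. -/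
abbrev ArtinTri (M N P : ℕ) : Type := PresentedGroup (ArtinTri.rels M N P)

/-- A group `G` is poly-free if it has a finite subnormal chain
`1 = G₀ ⊴ G₁ ⊴ ⋯ ⊴ Gₙ = G` whose successive quotients are free groups
(equivalently, each `Gᵢ₊₁` surjects onto a free group with kernel `Gᵢ`). -/
def IsPolyFree (G : Type u) [Group G] : Prop :=
  ∃ (n : ℕ) (s : Fin (n + 1) → Subgroup G),
    s 0 = ⊥ ∧ s (Fin.last n) = ⊤ ∧
    ∀ i : Fin n, s i.castSucc ≤ s i.succ ∧
      ∃ (ι : Type u) (f : ↥(s i.succ) →* FreeGroup ι),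
        Function.Surjective f ∧ f.ker = (s i.castSucc).subgroupOf (s i.succ)

/-! ### Alternating words in a group -/

/-- The alternating product `xyxy⋯` with `n` factors, in an arbitrary group. -/
def altProd {G : Type*} [Group G] : ℕ → G → G → G
  | 0, _, _ => 1
  | n + 1, x, y => x * altProd n y x

theorem map_altWord {α : Type} {G : Type*} [Group G] (f : FreeGroup α →* G) (n : ℕ)
    (x y : FreeGroup α) : f (altWord n x y) = altProd n (f x) (f y) := by
  induction n generalizing x y with
  | zero => simp [altWord, altProd]
  | succ n ih => simp [altWord, altProd, ih]

theorem map_altProd {G H : Type*} [Group G] [Group H] (f : G →* H) (n : ℕ)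
    (x y : G) : f (altProd n x y) = altProd n (f x) (f y) := by
  induction n generalizing x y with
  | zero => simp [altProd]
  | succ n ih => simp [altProd, ih]

theorem altProd_two_mul {G : Type*} [Group G] (k : ℕ) (x y : G) :
    altProd (2 * k) x y = (x * y) ^ k := by
  induction k with
  | zero => simp [altProd]
  | succ k ih => rw [Nat.mul_succ, altProd, altProd, ih, pow_succ', mul_assoc]

theorem altProd_two_mul_add_one {G : Type*} [Group G] (k : ℕ) (x y : G) :
    altProd (2 * k + 1) x y = (x * y) ^ k * x := by
  rw [altProd, altProd_two_mul]
  exact (mul_pow_mul x y k).symm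

theorem altProd_comm_of_involutive {G : Type*} [Group G] {x y : G} (hx : x * x = 1)
    (hy : y * y = 1) {m : ℕ} (h : (x * y) ^ m = 1) : altProd m x y = altProd m y x := by
  have hyx : y * x = (x * y)⁻¹ := by
    rw [mul_inv_rev, inv_eq_of_mul_eq_one_right hx, inv_eq_of_mul_eq_one_right hy]
  obtain ⟨k, rfl | rfl⟩ := Nat.even_or_odd' m
  · rw [altProd_two_mul, altProd_two_mul, hyx, inv_pow, eq_inv_iff_mul_eq_one, ← pow_add,
      ← two_mul, h]
  · rw [altProd_two_mul_add_one, altProd_two_mul_add_one, hyx, inv_pow, eq_inv_mul_iff_mul_eq,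
      ← mul_assoc, ← pow_add, ← two_mul]
    apply mul_right_cancel (b := y)
    rw [mul_assoc, ← pow_succ, h, hy]

theorem eq_of_altProd_comm_of_odd {A : Type*} [CommGroup A] {x y : A} {m : ℕ} (hm : Odd m)
    (h : altProd m x y = altProd m y x) : x = y := by
  obtain ⟨k, rfl⟩ := hm
  rw [altProd_two_mul_add_one, altProd_two_mul_add_one, mul_comm y x] at h
  exact mul_left_cancel h

/-! ### The Alexander module -/

theorem isCoprime_geom_sum {R : Type*} [CommRing R] (s : R) {m n : ℕ} (hm : 2 ≤ m)
    (h : Nat.Coprime m n) :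
    IsCoprime (∑ i ∈ Finset.range m, s ^ i) (∑ i ∈ Finset.range n, s ^ i) := by
  have dvd (p q : ℕ) :
      (∑ i ∈ Finset.range p, s ^ i) ∣ ∑ i ∈ Finset.range (p * q), s ^ i := by
    induction q with
    | zero => simp
    | succ q ih =>
      rw [Nat.mul_succ, Finset.sum_range_add]
      refine dvd_add ih ?_
      simp_rw [pow_add]
      rw [← Finset.mul_sum]
      exact dvd_mul_left _ _
  -- A Bezout relation `n * l = m * k + 1` gives `[n * l] = s * [m * k] + 1`.
  obtain ⟨l, hl⟩ := Nat.exists_mul_mod_eq_one_of_coprime h.symm hm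
  have e : n * l = m * (n * l / m) + 1 := by
    conv_lhs => rw [← Nat.div_add_mod (n * l) m, hl.2]
  obtain ⟨u, hu⟩ := dvd n l
  obtain ⟨v, hv⟩ := dvd m (n * l / m)
  rw [e, Finset.sum_range_succ'] at hu
  simp_rw [pow_succ] at hu
  rw [← Finset.sum_mul, hv] at hu
  exact ⟨-(s * v), u, by linear_combination -hu⟩

open Polynomial in
/-- If coprime polynomials in an endomorphism both kill `v`, then `v = 0`. -/
theorem eq_zero_of_isCoprime {V : Type*} [AddCommGroup V] (s : Module.End ℤ V) {p q : ℤ[X]}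
    (h : IsCoprime p q) {v : V} (hp : aeval s p v = 0) (hq : aeval s q v = 0) : v = 0 := by
  obtain ⟨u, w, e⟩ := h
  have := congrArg (fun r => aeval s r v) e
  simpa [hp, hq] using this.symm

open Polynomial in
/-- The relation module computation: over `ℤ[s]` a module generated by `x` and `y` with
`[M] x = 0`, `[N] (x - y) = 0` and `[P] y = 0`, where `[n] = 1 + s + ⋯ + s ^ (n - 1)`, is zero
as soon as `M`, `N`, `P` are pairwise coprime. -/
theorem eq_zero_of_geom_sum {V : Type*} [AddCommGroup V] (s : Module.End ℤ V) {M N P : ℕ}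
    (hM : 2 ≤ M) (hN : 2 ≤ N) (hMN : Nat.Coprime M N) (hNP : Nat.Coprime N P)
    (hMP : Nat.Coprime M P) {x y : V}
    (hx : (∑ i ∈ Finset.range M, s ^ i) x = 0)
    (hxy : (∑ i ∈ Finset.range N, s ^ i) (x - y) = 0)
    (hy : (∑ i ∈ Finset.range P, s ^ i) y = 0) : x = 0 ∧ y = 0 := by
  let p (n : ℕ) : ℤ[X] := ∑ i ∈ Finset.range n, X ^ i
  have hp (n : ℕ) : aeval s (p n) = ∑ i ∈ Finset.range n, s ^ i := by simp [p]
  rw [← hp] at hx hxy hy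
  have comm (q r : ℤ[X]) (v : V) : aeval s q (aeval s r v) = aeval s r (aeval s q v) := by
    rw [← Module.End.mul_apply, ← map_mul, mul_comm, map_mul, Module.End.mul_apply]
  have hN' : aeval s (p N) x = aeval s (p N) y := by
    rwa [map_sub, sub_eq_zero] at hxy
  -- `[N] x = [N] y` is killed by both `[M]` and `[P]`.
  have h0 : aeval s (p N) x = 0 := by
    refine eq_zero_of_isCoprime s (isCoprime_geom_sum X hM hMP) ?_ ?_
    · change aeval s (p M) _ = 0
      rw [comm, hx, map_zero]
    · change aeval s (p P) _ = 0
      rw [hN', comm, hy, map_zero]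
  exact ⟨eq_zero_of_isCoprime s (isCoprime_geom_sum X hM hMN) hx h0,
    eq_zero_of_isCoprime s (isCoprime_geom_sum X hN hNP) (hN' ▸ h0) hy⟩

/-- A form of Fox calculus: let `a` act on the abelian subgroup `ι V` of `Q` by `t`. Then the
braid relation of length `n` between `x a` and `y a`, for `x` and `y` in `V`, says that
`1 + (-t) + ⋯ + (-t) ^ (n - 1)` kills `x - y`. -/
theorem geom_sum_of_altProd_comm {V Q : Type*} [AddCommGroup V] [Group Q]
    (ι : Multiplicative V →* Q) (hι : Function.Injective ι) (t : Module.End ℤ V) (a : Q)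
    (ha : ∀ v : V, a * ι (.ofAdd v) = ι (.ofAdd (t v)) * a) (n : ℕ) (x y : V)
    (h : altProd n (ι (.ofAdd x) * a) (ι (.ofAdd y) * a) =
      altProd n (ι (.ofAdd y) * a) (ι (.ofAdd x) * a)) :
    (∑ i ∈ Finset.range n, (-t) ^ i) (x - y) = 0 := by
  -- Move all letters `a` to the right.
  have key (n : ℕ) : ∃ w w' : V,
      altProd n (ι (.ofAdd x) * a) (ι (.ofAdd y) * a) = ι (.ofAdd w) * a ^ n ∧
      altProd n (ι (.ofAdd y) * a) (ι (.ofAdd x) * a) = ι (.ofAdd w') * a ^ n ∧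
      (∑ i ∈ Finset.range n, (-t) ^ i) (x - y) = w - w' := by
    induction n with
    | zero => exact ⟨0, 0, by simp [altProd], by simp [altProd], by simp⟩
    | succ n ih =>
      obtain ⟨w, w', h1, h2, h3⟩ := ih
      have step (u v : V) : ι (.ofAdd u) * a * (ι (.ofAdd v) * a ^ n) =
          ι (.ofAdd (u + t v)) * a ^ (n + 1) := by
        rw [ofAdd_add, map_mul, pow_succ', mul_assoc, ← mul_assoc a, ha]
        simp only [mul_assoc]
      refine ⟨x + t w', y + t w, ?_, ?_, ?_⟩
      · rw [altProd, h2, step]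
      · rw [altProd, h1, step]
      · rw [Finset.sum_range_succ']
        simp_rw [pow_succ']
        rw [← Finset.mul_sum, LinearMap.add_apply, Module.End.mul_apply, h3]
        simp
        abel
  obtain ⟨w, w', h1, h2, h3⟩ := key n
  rw [h1, h2, mul_left_inj] at h
  have := Multiplicative.ofAdd.injective (hι h)
  rw [h3, this, sub_self]

/-- In a metabelian group, three elements with equal image in the abelianization that satisfy
the braid relations of a pairwise coprime triangle are equal. -/
theorem eq_of_metabelian {Q : Type*} [Group Q]
    (hQ : ∀ u ∈ commutator Q, ∀ v ∈ commutator Q, u * v = v * u) {M N P : ℕ}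
    (hM : 2 ≤ M) (hN : 2 ≤ N) (hMN : Nat.Coprime M N) (hNP : Nat.Coprime N P)
    (hMP : Nat.Coprime M P) {a b c : Q}
    (hab : altProd M a b = altProd M b a) (hbc : altProd N b c = altProd N c b)
    (hca : altProd P c a = altProd P a c)
    (hb : b * a⁻¹ ∈ commutator Q) (hc : c * a⁻¹ ∈ commutator Q) : b = a ∧ c = a := by
  let _ : CommGroup (commutator Q) :=
    { (inferInstance : Group (commutator Q)) with
      mul_comm := fun u v => Subtype.ext (hQ u u.2 v v.2) }
  let V := Additive (commutator Q)
  let ι : Multiplicative V →* Q := (commutator Q).subtype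
  have hι : Function.Injective ι := (commutator Q).subtype_injective
  let t : Module.End ℤ V :=
    (MonoidHom.toAdditive (MulAut.conjNormal a : MulAut (commutator Q)).toMonoidHom).toIntLinearMap
  have ha (v : V) : a * ι (.ofAdd v) = ι (.ofAdd (t v)) * a := by
    change a * (v.toMul : Q) = ((MulAut.conjNormal a v.toMul : commutator Q) : Q) * a
    simp [MulAut.conjNormal_apply]
  let x : V := .ofMul ⟨_, hb⟩
  let y : V := .ofMul ⟨_, hc⟩
  have ex : ι (.ofAdd x) * a = b := inv_mul_cancel_right b a
  have ey : ι (.ofAdd y) * a = c := inv_mul_cancel_right c a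
  have e0 : ι (.ofAdd 0) * a = a := by simp
  have h1 := geom_sum_of_altProd_comm ι hι t a ha M x 0 (by rw [ex, e0, hab])
  have h2 := geom_sum_of_altProd_comm ι hι t a ha N x y (by rw [ex, ey, hbc])
  have h3 := geom_sum_of_altProd_comm ι hι t a ha P y 0 (by rw [ey, e0, hca])
  rw [sub_zero] at h1 h3
  obtain ⟨hx, hy⟩ := eq_zero_of_geom_sum (-t) hM hN hMN hNP hMP h1 h2 h3
  exact ⟨by rw [← ex, hx, e0], by rw [← ey, hy, e0]⟩

/-! ### The commutator subgroup is perfect -/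

namespace ArtinTri

/-- The image in the Artin group of the `i`-th generator. -/
abbrev gen (M N P : ℕ) (i : Fin 3) : ArtinTri M N P := PresentedGroup.of i

variable (M N P : ℕ)

theorem altProd_eq_of_mem_rels {i j : Fin 3} {K : ℕ}
    (h : altWord K (FreeGroup.of i) (FreeGroup.of j) *
      (altWord K (FreeGroup.of j) (FreeGroup.of i))⁻¹ ∈ rels M N P) :
    altProd K (gen M N P i) (gen M N P j) = altProd K (gen M N P j) (gen M N P i) := by
  have := PresentedGroup.one_of_mem h
  rwa [map_mul, map_inv, mul_inv_eq_one, map_altWord, map_altWord] at this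

theorem rel_ab : altProd M (gen M N P 0) (gen M N P 1) = altProd M (gen M N P 1) (gen M N P 0) :=
  altProd_eq_of_mem_rels M N P (Or.inl rfl)

theorem rel_bc : altProd N (gen M N P 1) (gen M N P 2) = altProd N (gen M N P 2) (gen M N P 1) :=
  altProd_eq_of_mem_rels M N P (Or.inr (Or.inl rfl))

theorem rel_ca : altProd P (gen M N P 2) (gen M N P 0) = altProd P (gen M N P 0) (gen M N P 2) :=
  altProd_eq_of_mem_rels M N P (Or.inr (Or.inr rfl))

variable {M N P}

/-- At least two of `M`, `N`, `P` are odd, so all generators agree in any abelian quotient. -/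
theorem map_gen_eq_of_commGroup (hMN : Nat.Coprime M N) (hNP : Nat.Coprime N P)
    (hMP : Nat.Coprime M P) {A : Type*} [CommGroup A] (f : ArtinTri M N P →* A) :
    f (gen M N P 1) = f (gen M N P 0) ∧ f (gen M N P 2) = f (gen M N P 0) := by
  have h1 : Odd M → f (gen M N P 0) = f (gen M N P 1) := fun h =>
    eq_of_altProd_comm_of_odd h (by rw [← map_altProd, rel_ab, map_altProd])
  have h2 : Odd N → f (gen M N P 1) = f (gen M N P 2) := fun h =>
    eq_of_altProd_comm_of_odd h (by rw [← map_altProd, rel_bc, map_altProd])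
  have h3 : Odd P → f (gen M N P 2) = f (gen M N P 0) := fun h =>
    eq_of_altProd_comm_of_odd h (by rw [← map_altProd, rel_ca, map_altProd])
  have two {m n : ℕ} (h : Nat.Coprime m n) : Odd m ∨ Odd n := by
    by_contra! hc
    rw [Nat.not_odd_iff_even, Nat.not_odd_iff_even] at hc
    exact Nat.not_coprime_of_dvd_of_dvd one_lt_two hc.1.two_dvd hc.2.two_dvd h
  have := two hMN
  have := two hNP
  have := two hMP
  grind

theorem commutator_le_derivedSeries_two (hM : 2 ≤ M) (hN : 2 ≤ N)
    (hMN : Nat.Coprime M N) (hNP : Nat.Coprime N P) (hMP : Nat.Coprime M P) :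
    commutator (ArtinTri M N P) ≤ derivedSeries (ArtinTri M N P) 2 := by
  let Q := ArtinTri M N P ⧸ derivedSeries (ArtinTri M N P) 2
  let π : ArtinTri M N P →* Q := QuotientGroup.mk' _
  have hπ : Function.Surjective π := QuotientGroup.mk'_surjective _
  have hQ : ⁅commutator Q, commutator Q⁆ = ⊥ := by
    have h := map_derivedSeries_eq (f := π) hπ 2
    have h0 : (derivedSeries (ArtinTri M N P) 2).map π = ⊥ := by
      rw [Subgroup.map_eq_bot_iff, QuotientGroup.ker_mk']
    have h1 : derivedSeries Q 2 = ⊥ := h.symm.trans h0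
    have h2 := derivedSeries_succ Q 1
    rw [derivedSeries_one] at h2
    exact h2.symm.trans h1
  have hQ' : ∀ u ∈ commutator Q, ∀ v ∈ commutator Q, u * v = v * u := fun u hu v hv =>
    commutatorElement_eq_one_iff_mul_comm.mp
      ((Subgroup.mem_bot).mp (hQ ▸ Subgroup.commutator_mem_commutator hu hv))
  obtain ⟨h1, h2⟩ := map_gen_eq_of_commGroup hMN hNP hMP (Abelianization.of.comp π)
  have mem {u v : Q} (h : Abelianization.of u = Abelianization.of v) :
      u * v⁻¹ ∈ commutator Q := by
    rw [← Abelianization.ker_of, MonoidHom.mem_ker, map_mul, map_inv, h, mul_inv_cancel]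
  obtain ⟨e1, e2⟩ := eq_of_metabelian hQ' hM hN hMN hNP hMP
    (a := π (gen M N P 0)) (b := π (gen M N P 1)) (c := π (gen M N P 2))
    (by rw [← map_altProd, rel_ab, map_altProd]) (by rw [← map_altProd, rel_bc, map_altProd])
    (by rw [← map_altProd, rel_ca, map_altProd]) (mem h1) (mem h2)
  have cyc (g : ArtinTri M N P) : π g ∈ Subgroup.zpowers (π (gen M N P 0)) := by
    have : (⊤ : Subgroup (ArtinTri M N P)) ≤
        (Subgroup.zpowers (π (gen M N P 0))).comap π := by
      rw [← PresentedGroup.closure_range_of, Subgroup.closure_le]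
      rintro _ ⟨i, rfl⟩
      have h0 := Subgroup.mem_zpowers (π (gen M N P 0))
      fin_cases i
      · exact h0
      · exact e1.symm ▸ h0
      · exact e2.symm ▸ h0
    exact this (Subgroup.mem_top g)
  rw [commutator_def, Subgroup.commutator_le]
  intro g _ h _
  rw [← QuotientGroup.ker_mk' (derivedSeries (ArtinTri M N P) 2), MonoidHom.mem_ker,
    map_commutatorElement, commutatorElement_eq_one_iff_mul_comm]
  obtain ⟨i, hi⟩ := cyc g
  obtain ⟨j, hj⟩ := cyc h
  change π g * π h = π h * π g
  rw [← hi, ← hj]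
  exact (Commute.refl _).zpow_zpow i j

/-! ### The reflection representation -/

/-- The Gram matrix `2 ⟨eᵢ, eⱼ⟩` of the Coxeter group of the triangle, as a function of the three
numbers `u = 2 cos (π / M)`, `v = 2 cos (π / N)`, `w = 2 cos (π / P)`. -/
def gram (u v w : ℝ) : Matrix (Fin 3) (Fin 3) ℝ := !![2, -u, -w; -u, 2, -v; -w, -v, 2]

end ArtinTri

/-- Two reflections `r`, `r'` in vectors with `f y = g x = -2 cos (π / m)` satisfy
`(r r') ^ m = 1`: their product rotates by `2 π / m`. -/
theorem reflection_mul_reflection_pow_eq_one {V : Type*} [AddCommGroup V] [Module ℝ V] {x y : V}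
    {f g : Module.Dual ℝ V} (hf : f x = 2) (hg : g y = 2) {m : ℕ} (hm : 2 ≤ m)
    (hfy : f y = -(2 * Real.cos (Real.pi / m))) (hgx : g x = -(2 * Real.cos (Real.pi / m))) :
    (Module.reflection hf * Module.reflection hg) ^ m = 1 := by
  open Polynomial.Chebyshev in
  obtain rfl | hm3 : m = 2 ∨ 3 ≤ m := by lia
  · have h0 : Real.cos (Real.pi / (2 : ℕ)) = 0 := by simp
    rw [h0] at hfy hgx
    ext z
    simp [pow_two, Module.reflection_apply, hf, hg, hfy, hgx]
    module
  · set θ := 2 * (Real.pi / m) with hθ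
    have hm0 : (m : ℝ) ≠ 0 := by positivity
    have hsin : Real.sin θ ≠ 0 := by
      have h3 : (3 : ℝ) ≤ m := by exact_mod_cast hm3
      refine (Real.sin_pos_of_pos_of_lt_pi (by positivity) ?_).ne'
      rw [hθ, ← mul_div_assoc, div_lt_iff₀ (by positivity)]
      nlinarith [Real.pi_pos]
    have ht : 2 * Real.cos θ = f y * g x - 2 := by
      rw [hfy, hgx, hθ, Real.cos_two_mul]; ring
    ext z
    rw [Module.reflection_mul_reflection_pow_apply hf hg m z _ ht]
    have hmθ : m * θ = 2 * Real.pi := by rw [hθ]; field_simp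
    obtain ⟨k, rfl | rfl⟩ := Nat.even_or_odd' m
    · have hS : (S ℝ ((k : ℤ) - 1)).eval (2 * Real.cos θ) = 0 := by
        apply (mul_eq_zero.mp _).resolve_right hsin
        rw [S_two_mul_real_cos]
        have : (k : ℝ) * θ = Real.pi := by push_cast at hmθ; linarith
        push_cast
        rw [sub_add_cancel, this, Real.sin_pi]
      have i1 : (((2 * k : ℕ) : ℤ) - 2) / 2 = k - 1 := by lia
      have i2 : (((2 * k : ℕ) : ℤ) - 1) / 2 = k - 1 := by lia
      rw [i1, i2, hS]
      simp
    · have hS : (S ℝ (k : ℤ)).eval (2 * Real.cos θ) +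
          (S ℝ ((k : ℤ) - 1)).eval (2 * Real.cos θ) = 0 := by
        apply (mul_eq_zero.mp _).resolve_right hsin
        rw [add_mul, S_two_mul_real_cos, S_two_mul_real_cos]
        have : ((k : ℤ) + 1 : ℝ) * θ = 2 * Real.pi - k * θ := by push_cast at hmθ ⊢; linarith
        rw [this, Real.sin_two_pi_sub]
        push_cast
        rw [sub_add_cancel, neg_add_cancel]
      have i1 : (((2 * k + 1 : ℕ) : ℤ) - 2) / 2 = k - 1 := by lia
      have i2 : (((2 * k + 1 : ℕ) : ℤ) - 1) / 2 = k := by lia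
      have i3 : (((2 * k + 1 : ℕ) : ℤ) - 3) / 2 = k - 1 := by lia
      have i4 : ((2 * k + 1 : ℕ) : ℤ) / 2 = k := by lia
      rw [i1, i2, i3, i4, hS]
      simp

/-- Reflections with nonzero symmetric pairing in independent vectors do not commute. -/
theorem pairing_eq_zero_of_commute {V : Type*} [AddCommGroup V] [Module ℝ V] {x y : V}
    {f g : Module.Dual ℝ V} (hf : f x = 2) (hg : g y = 2) {d : ℝ} (hfy : f y = d) (hgx : g x = d)
    (hli : LinearIndependent ℝ ![x, y])
    (h : Module.reflection hf * Module.reflection hg =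
      Module.reflection hg * Module.reflection hf) : d = 0 := by
  have e := LinearEquiv.congr_fun h x
  simp only [LinearEquiv.mul_apply, Module.reflection_apply, map_sub, map_smul, hf, hfy, hgx] at e
  have e2 : (d * d) • x + (-(2 * d)) • y = 0 := by
    rw [← sub_eq_zero] at e
    rw [← e]
    module
  have := (LinearIndependent.pair_iff.mp hli _ _ e2).2
  linarith

namespace ArtinTri

variable {M N P : ℕ}

theorem commutator_ne_bot (hM : 2 ≤ M) (hN : 2 ≤ N) (hP : 2 ≤ P) (hMN : Nat.Coprime M N) :
    commutator (ArtinTri M N P) ≠ ⊥ := by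
  intro hbot
  let φ (n : ℕ) : ℝ := 2 * Real.cos (Real.pi / n)
  let f (i : Fin 3) : Module.Dual ℝ (Fin 3 → ℝ) :=
    LinearMap.proj i ∘ₗ (gram (φ M) (φ N) (φ P)).mulVecLin
  let e (i : Fin 3) : Fin 3 → ℝ := Pi.single i 1
  have hf (i j : Fin 3) : f i (e j) = gram (φ M) (φ N) (φ P) i j := by simp [f, e]
  have h2 (i : Fin 3) : f i (e i) = 2 := by rw [hf]; fin_cases i <;> rfl
  let r (i : Fin 3) : (Fin 3 → ℝ) ≃ₗ[ℝ] (Fin 3 → ℝ) := Module.reflection (h2 i)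
  have hr (i : Fin 3) : r i * r i = 1 := by
    ext1 v
    exact Module.involutive_reflection (h2 i) v
  have braid (i j : Fin 3) (m : ℕ) (hm : 2 ≤ m) (hij : gram (φ M) (φ N) (φ P) i j = -φ m)
      (hji : gram (φ M) (φ N) (φ P) j i = -φ m) :
      altProd m (r i) (r j) = altProd m (r j) (r i) :=
    altProd_comm_of_involutive (hr i) (hr j) (reflection_mul_reflection_pow_eq_one _ _ hm
      ((hf i j).trans hij) ((hf j i).trans hji))
  have hrel : ∀ w ∈ rels M N P, FreeGroup.lift r w = 1 := by
    rintro w (rfl | rfl | rfl) <;>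
      simp only [map_mul, map_inv, mul_inv_eq_one, map_altWord, a, b, c, FreeGroup.lift_apply_of]
    · exact braid 0 1 M hM rfl rfl
    · exact braid 1 2 N hN rfl rfl
    · exact braid 2 0 P hP rfl rfl
  let ρ := PresentedGroup.toGroup hrel
  have hρ (i : Fin 3) : ρ (gen M N P i) = r i := PresentedGroup.toGroup.of hrel
  have comm (i j : Fin 3) : r i * r j = r j * r i := by
    rw [← hρ, ← hρ, ← map_mul, ← map_mul, commutatorElement_eq_one_iff_mul_comm.mp]
    rw [← Subgroup.mem_bot, ← hbot, commutator_def]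
    exact Subgroup.commutator_mem_commutator (Subgroup.mem_top _) (Subgroup.mem_top _)
  have key (i j : Fin 3) (hne : i ≠ j) (m : ℕ) (hm : 3 ≤ m)
      (hij : gram (φ M) (φ N) (φ P) i j = -φ m)
      (hji : gram (φ M) (φ N) (φ P) j i = -φ m) : False := by
    have hli : LinearIndependent ℝ ![e i, e j] := by
      rw [LinearIndependent.pair_iff]
      intro s t hst
      have hi := congrFun hst i
      have hj := congrFun hst j
      simp [e, hne, hne.symm] at hi hj
      exact ⟨hi, hj⟩
    have h0 := pairing_eq_zero_of_commute (h2 i) (h2 j) ((hf i j).trans hij)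
      ((hf j i).trans hji) hli (comm i j)
    have h3 : (3 : ℝ) ≤ m := by exact_mod_cast hm
    have hpos : 0 < Real.cos (Real.pi / m) := by
      apply Real.cos_pos_of_mem_Ioo
      have hp : 0 < Real.pi / m := by positivity
      refine ⟨by linarith [Real.pi_pos], ?_⟩
      exact div_lt_div_of_pos_left Real.pi_pos two_pos (by linarith)
    simp only [φ] at h0
    linarith
  obtain h | h : 3 ≤ M ∨ 3 ≤ N := by
    by_contra! hc
    obtain rfl : M = 2 := by lia
    obtain rfl : N = 2 := by lia
    norm_num at hMN
  · exact key 0 1 (by decide) M h rfl rfl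
  · exact key 1 2 (by decide) N h rfl rfl

end ArtinTri

/-! ### Perfect subgroups of poly-free groups -/

/-- A perfect group has no nontrivial homomorphism to a free group: by Nielsen–Schreier the image
is free, and a nontrivial free group surjects onto `ℤ`. -/
theorem perfect_hom_freeGroup {H : Type*} [Group H] (hH : commutator H = ⊤) {ι : Type*}
    (f : H →* FreeGroup ι) (h : H) : f h = 1 := by
  have : IsEmpty (IsFreeGroup.Generators f.range) := by
    refine ⟨fun i => ?_⟩
    let p : f.range →* Multiplicative ℤ := IsFreeGroup.lift fun _ => Multiplicative.ofAdd 1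
    have hp : p (IsFreeGroup.of i) = Multiplicative.ofAdd 1 := IsFreeGroup.lift_of _ _
    obtain ⟨u, hu⟩ := f.rangeRestrict_surjective (IsFreeGroup.of i)
    have hu' : u ∈ commutator H := hH ▸ Subgroup.mem_top u
    have := Abelianization.commutator_subset_ker (p.comp f.rangeRestrict) hu'
    rw [MonoidHom.mem_ker, MonoidHom.comp_apply, hu, hp] at this
    exact absurd this (by decide)
  have hid : MonoidHom.id f.range = 1 := IsFreeGroup.ext_hom fun i => isEmptyElim i
  simpa using congrArg Subtype.val (DFunLike.congr_fun hid (f.rangeRestrict h))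

theorem IsPolyFree.eq_bot_of_perfect {G : Type u} [Group G] (hG : IsPolyFree G) {H : Subgroup G}
    (hH : H ≤ ⁅H, H⁆) : H = ⊥ := by
  obtain ⟨n, s, h0, hn, hs⟩ := hG
  have hperf : commutator H = ⊤ := by
    apply Subgroup.map_injective H.subtype_injective
    rw [Subgroup.map_subtype_commutator, ← MonoidHom.range_eq_map, Subgroup.range_subtype]
    exact le_antisymm (Subgroup.commutator_le_self H) hH
  have key (i : Fin (n + 1)) : H ≤ s i := by
    induction i using Fin.reverseInduction with
    | last => rw [hn]; exact le_top
    | cast i ih =>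
      obtain ⟨-, ι, f, -, hker⟩ := hs i
      intro h hh
      have := perfect_hom_freeGroup hperf (f.comp (Subgroup.inclusion ih)) ⟨h, hh⟩
      rw [MonoidHom.comp_apply, ← MonoidHom.mem_ker, hker] at this
      exact this
  exact le_bot_iff.mp (h0 ▸ key 0)

/-- If `M, N, P ≥ 2` are pairwise coprime, then the triangle Artin
group `Art_{M,N,P}` is not poly-free. -/
theorem artinTri_not_polyFree (M N P : ℕ) (hM : 2 ≤ M) (hN : 2 ≤ N) (hP : 2 ≤ P)
    (hMN : Nat.Coprime M N) (hNP : Nat.Coprime N P) (hMP : Nat.Coprime M P) :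
    ¬ IsPolyFree (ArtinTri M N P) := by
  intro h
  refine ArtinTri.commutator_ne_bot hM hN hP hMN (h.eq_bot_of_perfect ?_)
  simpa [derivedSeries_succ] using
    ArtinTri.commutator_le_derivedSeries_two hM hN hMN hNP hMP
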